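/- arXiv:2605.12971 — 8 statements merged into one kernel-verified Lean document; each statement's English description precedes it below -/
import Mathlib

section
/- Let q : ℝ → ℝ^{n_q}, p : ℝ → ℝ^{n_p}, s : ℝ → ℝ^{n_s} be differentiable curves satisfying, for all t, the PHS-DP dynamics q'(t) = J_qp ∇_p H_qp(q(t),p(t)), p'(t) = -J_qpᵀ ∇_q H_qp(q(t),p(t)) + J_pp ∇_p H_qp(q(t),p(t)) - ∇F_p(p(t)) - J_qpᵀ ∇_q H_s(q(t),s(t)), s'(t) = -∇F_s(s(t)) + g·u(t). Then for every t, the total energy t ↦ H_qp(q(t),p(t)) + H_s(q(t),s(t)) is differentiable with derivative equal to -⟨∇_p H_qp(q(t),p(t)), ∇F_p(p(t))⟩ - ⟨∇_s H_s(q(t),s(t)), ∇F_s(s(t))⟩ + ⟨gᵀ ∇_s H_s(q(t),s(t)), u(t)⟩. -/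
/-!
By the chain rule, the energy has derivative
`⟪∇_q H_qp, q'⟫ + ⟪∇_p H_qp, p'⟫ + ⟪∇_q H_s, q'⟫ + ⟪∇_s H_s, s'⟫`
(`hasDerivAt_comp_prodMk_gradient`). After inserting the dynamics and moving matrices across
the inner product (`inner_toEuclideanLin_transpose`), the `J_qp` terms cancel in pairs and the
`J_pp` term vanishes by skew-symmetry (`inner_toEuclideanLin_self_of_skew`); the dissipation
and port terms remain.
-/

open scoped RealInnerProductSpace Matrix

/-- Chain rule along a curve in a product, in terms of the partial gradients. Joint
differentiability is what makes the partial gradients determine the full derivative. -/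
lemma hasDerivAt_comp_prodMk_gradient {E F : Type*}
    [NormedAddCommGroup E] [InnerProductSpace ℝ E] [CompleteSpace E]
    [NormedAddCommGroup F] [InnerProductSpace ℝ F] [CompleteSpace F]
    {H : E × F → ℝ} {x : ℝ → E} {y : ℝ → F} {x' : E} {y' : F} {t : ℝ}
    (hH : DifferentiableAt ℝ H (x t, y t))
    (hx : HasDerivAt x x' t) (hy : HasDerivAt y y' t) :
    HasDerivAt (fun τ => H (x τ, y τ))
      (⟪gradient (fun a => H (a, y t)) (x t), x'⟫
        + ⟪gradient (fun b => H (x t, b)) (y t), y'⟫) t := by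
  have hD := hH.hasFDerivAt
  have h1 : HasFDerivAt (fun a => H (a, y t)) _ (x t) :=
    hD.comp (x t) (hasFDerivAt_prodMk_left (x t) (y t))
  have h2 : HasFDerivAt (fun b => H (x t, b)) _ (y t) :=
    hD.comp (y t) (hasFDerivAt_prodMk_right (x t) (y t))
  have h := hD.comp_hasDerivAt t (hx.prodMk hy)
  refine h.congr_deriv ?_
  rw [gradient, gradient, InnerProductSpace.toDual_symm_apply,
    InnerProductSpace.toDual_symm_apply, h1.fderiv, h2.fderiv]
  simp [← map_add]

lemma inner_toEuclideanLin_transpose {m n : ℕ} (A : Matrix (Fin m) (Fin n) ℝ)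
    (x : EuclideanSpace ℝ (Fin m)) (y : EuclideanSpace ℝ (Fin n)) :
    ⟪Matrix.toEuclideanLin Aᵀ x, y⟫ = ⟪x, Matrix.toEuclideanLin A y⟫ := by
  rw [← Matrix.conjTranspose_eq_transpose_of_trivial,
    Matrix.toEuclideanLin_conjTranspose_eq_adjoint, LinearMap.adjoint_inner_left]

lemma inner_toEuclideanLin_self_of_skew {n : ℕ} {A : Matrix (Fin n) (Fin n) ℝ}
    (hA : Aᵀ = -A) (x : EuclideanSpace ℝ (Fin n)) :
    ⟪x, Matrix.toEuclideanLin A x⟫ = 0 := by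
  have h := inner_toEuclideanLin_transpose A x x
  rw [hA, map_neg, LinearMap.neg_apply, inner_neg_left, real_inner_comm] at h
  linarith

/-- power balance for a port-Hamiltonian system with dissipation
potential (PHS-DP) with standard symplectic interconnection
(`J_qq = 0`, `J_pq = -J_qpᵀ`): along any solution of the dynamics, the total
energy `H_qp + H_s` is differentiable with derivative
`-⟨∇_p H_qp, ∇F_p⟩ - ⟨∇_s H_s, ∇F_s⟩ + ⟨gᵀ ∇_s H_s, u⟩`. -/
theorem phs_dp_power_balance
    (nq np ns nm : ℕ)
    (Hqp : EuclideanSpace ℝ (Fin nq) × EuclideanSpace ℝ (Fin np) → ℝ)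
    (Hs : EuclideanSpace ℝ (Fin nq) × EuclideanSpace ℝ (Fin ns) → ℝ)
    (Fp : EuclideanSpace ℝ (Fin np) → ℝ)
    (Fs : EuclideanSpace ℝ (Fin ns) → ℝ)
    (hHqp : Differentiable ℝ Hqp) (hHs : Differentiable ℝ Hs)
    (hFp : Differentiable ℝ Fp) (hFs : Differentiable ℝ Fs)
    (Jqp : Matrix (Fin nq) (Fin np) ℝ)
    (Jpp : Matrix (Fin np) (Fin np) ℝ) (hJpp : Jppᵀ = -Jpp)
    (g : Matrix (Fin ns) (Fin nm) ℝ)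
    (u : ℝ → EuclideanSpace ℝ (Fin nm))
    (q : ℝ → EuclideanSpace ℝ (Fin nq))
    (p : ℝ → EuclideanSpace ℝ (Fin np))
    (s : ℝ → EuclideanSpace ℝ (Fin ns))
    (hq : ∀ t, HasDerivAt q
      (Matrix.toEuclideanLin Jqp (gradient (fun b => Hqp (q t, b)) (p t))) t)
    (hp : ∀ t, HasDerivAt p
      (-(Matrix.toEuclideanLin Jqpᵀ (gradient (fun a => Hqp (a, p t)) (q t)))
        + Matrix.toEuclideanLin Jpp (gradient (fun b => Hqp (q t, b)) (p t))
        - gradient Fp (p t)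
        - Matrix.toEuclideanLin Jqpᵀ (gradient (fun a => Hs (a, s t)) (q t))) t)
    (hs : ∀ t, HasDerivAt s
      (-(gradient Fs (s t)) + Matrix.toEuclideanLin g (u t)) t)
    (t : ℝ) :
    HasDerivAt (fun τ => Hqp (q τ, p τ) + Hs (q τ, s τ))
      (-⟪gradient (fun b => Hqp (q t, b)) (p t), gradient Fp (p t)⟫
        - ⟪gradient (fun c => Hs (q t, c)) (s t), gradient Fs (s t)⟫
        + ⟪Matrix.toEuclideanLin gᵀ (gradient (fun c => Hs (q t, c)) (s t)), u t⟫) t := by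
  have h1 := hasDerivAt_comp_prodMk_gradient (hHqp (q t, p t)) (hq t) (hp t)
  have h2 := hasDerivAt_comp_prodMk_gradient (hHs (q t, s t)) (hq t) (hs t)
  refine (h1.add h2).congr_deriv ?_
  have hJ := inner_toEuclideanLin_self_of_skew hJpp (gradient (fun b => Hqp (q t, b)) (p t))
  simp only [inner_add_right, inner_sub_right, inner_neg_right, hJ,
    ← inner_toEuclideanLin_transpose Jqp, inner_toEuclideanLin_transpose g]
  rw [real_inner_comm (Matrix.toEuclideanLin Jqpᵀ (gradient (fun a => Hqp (a, p t)) (q t))),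
    real_inner_comm (Matrix.toEuclideanLin Jqpᵀ (gradient (fun a => Hs (a, s t)) (q t)))]
  ring
end

section
/- Let q : ℝ → ℝ^{n_q}, p : ℝ → ℝ^{n_p}, s : ℝ → ℝ^{n_s} be differentiable curves satisfying, for all t, the PHS-DP dynamics q'(t) = J_qp ∇_p H_qp(q(t),p(t)), p'(t) = -J_qpᵀ ∇_q H_qp(q(t),p(t)) + J_pp ∇_p H_qp(q(t),p(t)) - ∇F_p(p(t)) - J_qpᵀ ∇_q H_s(q(t),s(t)), s'(t) = -∇F_s(s(t)) + g·u(t). Assume in addition that for all t, ⟨∇_p H_qp(q(t),p(t)), ∇F_p(p(t))⟩ ≥ 0 and ⟨∇_s H_s(q(t),s(t)), ∇F_s(s(t))⟩ ≥ 0. Then for every t, the derivative of the total energy t ↦ H_qp(q(t),p(t)) + H_s(q(t),s(t)) is at most ⟨y(t), u(t)⟩, where y(t) := gᵀ ∇_s H_s(q(t),s(t)) is the conjugate output; i.e., the system is passive with storage function H_qp + H_s and supply rate ⟨y,u⟩. -/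
/-!
By the chain rule the power balance is
`⟪∇_q H_qp + ∇_q H_s, q'⟫ + ⟪∇_p H_qp, p'⟫ + ⟪∇_s H_s, s'⟫`. After inserting the dynamics, the
`J_qp` and `-J_qpᵀ` terms cancel, the `J_pp` term vanishes by skew-symmetry, the two dissipation
terms are nonpositive, and moving `g` across the inner product turns the input term into `⟪y, u⟫`.
-/

open scoped RealInnerProductSpace Matrix

/-- Chain rule along a curve in a product space, in terms of the two partial gradients. -/
lemma hasDerivAt_comp_prod_gradient {E F : Type*}
    [NormedAddCommGroup E] [InnerProductSpace ℝ E] [CompleteSpace E]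
    [NormedAddCommGroup F] [InnerProductSpace ℝ F] [CompleteSpace F]
    {H : E × F → ℝ} (hH : Differentiable ℝ H) {x : ℝ → E} {y : ℝ → F} {x' : E} {y' : F} {t : ℝ}
    (hx : HasDerivAt x x' t) (hy : HasDerivAt y y' t) :
    HasDerivAt (fun τ => H (x τ, y τ))
      (⟪gradient (fun a => H (a, y t)) (x t), x'⟫
        + ⟪gradient (fun b => H (x t, b)) (y t), y'⟫) t := by
  have hd := (hH (x t, y t)).hasFDerivAt
  have h1 : HasFDerivAt (fun a => H (a, y t)) _ (x t) :=
    hd.comp (x t) (hasFDerivAt_prodMk_left (𝕜 := ℝ) (x t) (y t))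
  have h2 : HasFDerivAt (fun b => H (x t, b)) _ (y t) :=
    hd.comp (y t) (hasFDerivAt_prodMk_right (𝕜 := ℝ) (x t) (y t))
  refine (hd.comp_hasDerivAt t (hx.prodMk hy)).congr_deriv ?_
  rw [inner_gradient_left, inner_gradient_left, h1.fderiv, h2.fderiv,
    ContinuousLinearMap.comp_apply, ContinuousLinearMap.comp_apply, ← map_add]
  simp

/-- passivity of a port-Hamiltonian system with dissipation potential
(PHS-DP) with standard symplectic interconnection: if along the solution the
dissipation pairings are nonnegative, then the derivative of the total energy
`H_qp + H_s` is at most `⟨y, u⟩` where `y = gᵀ ∇_s H_s` is the conjugate output. -/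
theorem phs_dp_passivity
    (nq np ns nm : ℕ)
    (Hqp : EuclideanSpace ℝ (Fin nq) × EuclideanSpace ℝ (Fin np) → ℝ)
    (Hs : EuclideanSpace ℝ (Fin nq) × EuclideanSpace ℝ (Fin ns) → ℝ)
    (Fp : EuclideanSpace ℝ (Fin np) → ℝ)
    (Fs : EuclideanSpace ℝ (Fin ns) → ℝ)
    (hHqp : Differentiable ℝ Hqp) (hHs : Differentiable ℝ Hs)
    (hFp : Differentiable ℝ Fp) (hFs : Differentiable ℝ Fs)
    (Jqp : Matrix (Fin nq) (Fin np) ℝ)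
    (Jpp : Matrix (Fin np) (Fin np) ℝ) (hJpp : Jppᵀ = -Jpp)
    (g : Matrix (Fin ns) (Fin nm) ℝ)
    (u : ℝ → EuclideanSpace ℝ (Fin nm))
    (q : ℝ → EuclideanSpace ℝ (Fin nq))
    (p : ℝ → EuclideanSpace ℝ (Fin np))
    (s : ℝ → EuclideanSpace ℝ (Fin ns))
    (hq : ∀ t, HasDerivAt q
      (Matrix.toEuclideanLin Jqp (gradient (fun b => Hqp (q t, b)) (p t))) t)
    (hp : ∀ t, HasDerivAt p
      (-(Matrix.toEuclideanLin Jqpᵀ (gradient (fun a => Hqp (a, p t)) (q t)))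
        + Matrix.toEuclideanLin Jpp (gradient (fun b => Hqp (q t, b)) (p t))
        - gradient Fp (p t)
        - Matrix.toEuclideanLin Jqpᵀ (gradient (fun a => Hs (a, s t)) (q t))) t)
    (hs : ∀ t, HasDerivAt s
      (-(gradient Fs (s t)) + Matrix.toEuclideanLin g (u t)) t)
    (hdissp : ∀ t, 0 ≤ ⟪gradient (fun b => Hqp (q t, b)) (p t), gradient Fp (p t)⟫)
    (hdisss : ∀ t, 0 ≤ ⟪gradient (fun c => Hs (q t, c)) (s t), gradient Fs (s t)⟫)
    (t : ℝ) :
    deriv (fun τ => Hqp (q τ, p τ) + Hs (q τ, s τ)) t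
      ≤ ⟪Matrix.toEuclideanLin gᵀ (gradient (fun c => Hs (q t, c)) (s t)), u t⟫ := by
  have hE := (hasDerivAt_comp_prod_gradient hHqp (hq t) (hp t)).add
    (hasDerivAt_comp_prod_gradient hHs (hq t) (hs t))
  have hdp := hdissp t
  have hds := hdisss t
  refine hE.deriv.trans_le ?_
  generalize gradient (fun b => Hqp (q t, b)) (p t) = b at *
  have hskew : ⟪b, Matrix.toEuclideanLin Jpp b⟫ = 0 := by
    have h := inner_toEuclideanLin_transpose Jpp b b
    rw [hJpp, map_neg, LinearMap.neg_apply, inner_neg_left, real_inner_comm] at h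
    linarith
  have hJ (v : EuclideanSpace ℝ (Fin nq)) :
      ⟪b, Matrix.toEuclideanLin Jqpᵀ v⟫ = ⟪v, Matrix.toEuclideanLin Jqp b⟫ := by
    rw [real_inner_comm, inner_toEuclideanLin_transpose]
  simp only [inner_add_right, inner_sub_right, inner_neg_right, hskew, hJ,
    inner_toEuclideanLin_transpose]
  linarith
end

section
/- Let J be a real skew-symmetric n × n matrix, Φ a real symmetric positive definite n × n matrix, D a real n × n matrix, and set F := JΦ - D. If λ ∈ ℂ and v ∈ ℂⁿ is a nonzero vector with (F, viewed as a complex matrix) F v = λ v, then Re(λ) · Re(v* Φ v) = -Re(v* (Φ D) v), where v* denotes the conjugate transpose of v. -/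
open Matrix

/-!
Multiplying `(JΦ - D) v = λ v` on the left by `v* Φ` gives
`v* (ΦJΦ) v - v* (ΦD) v = λ · v* Φ v`. For a real matrix `A`, conjugating `v* A v` amounts to
transposing `A` (`star_quadForm`). Hence `v* Φ v` is real, because `Φ` is symmetric, and
`v* (ΦJΦ) v` is purely imaginary, because `ΦJΦ` is skew-symmetric. Taking real parts gives
the claim.
-/

theorem star_quadForm {n : ℕ} (A : Matrix (Fin n) (Fin n) ℝ) (v : Fin n → ℂ) :
    star (star v ⬝ᵥ (A.map Complex.ofReal).mulVec v)
      = star v ⬝ᵥ (Aᵀ.map Complex.ofReal).mulVec v := by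
  have hA : (A.map Complex.ofReal)ᴴ = Aᵀ.map Complex.ofReal := by
    ext i j
    simp
  rw [← hA, ← star_dotProduct_star, star_star, star_mulVec, dotProduct_mulVec, dotProduct_comm,
    dotProduct_comm]

/-- eigenvalue identity for `F = JΦ - D` with `J` real skew-symmetric
and `Φ` real symmetric positive definite: if `F v = λ v` with `v ≠ 0` (over `ℂ`),
then `Re(λ) · Re(v* Φ v) = -Re(v* (ΦD) v)`. -/
theorem eigenvalue_real_part_identity
    (n : ℕ) (J Φ D : Matrix (Fin n) (Fin n) ℝ)
    (hJ : Jᵀ = -J) (hΦsymm : Φ.IsSymm) (hΦpos : Φ.PosDef)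
    (lam : ℂ) (v : Fin n → ℂ) (hv : v ≠ 0)
    (heig : ((J * Φ - D).map Complex.ofReal).mulVec v = lam • v) :
    lam.re * (star v ⬝ᵥ (Φ.map Complex.ofReal).mulVec v).re
      = -((star v ⬝ᵥ ((Φ * D).map Complex.ofReal).mulVec v).re) := by
  have hmul : ∀ A B : Matrix (Fin n) (Fin n) ℝ,
      (A * B).map Complex.ofReal = A.map Complex.ofReal * B.map Complex.ofReal := fun A B =>
    Matrix.map_mul (f := Complex.ofRealHom)
  have hsub : ∀ A B : Matrix (Fin n) (Fin n) ℝ,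
      (A - B).map Complex.ofReal = A.map Complex.ofReal - B.map Complex.ofReal := by
    intro A B
    ext i j
    simp
  have key : (star v ⬝ᵥ ((Φ * J * Φ).map Complex.ofReal).mulVec v)
      - (star v ⬝ᵥ ((Φ * D).map Complex.ofReal).mulVec v)
      = lam * (star v ⬝ᵥ (Φ.map Complex.ofReal).mulVec v) := by
    rw [← dotProduct_sub, ← sub_mulVec, ← hsub, mul_assoc, ← mul_sub, hmul, ← mulVec_mulVec,
      heig, mulVec_smul, dotProduct_smul, smul_eq_mul]
  have hreal := congrArg Complex.im (star_quadForm Φ v)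
  have hskew := congrArg Complex.re (star_quadForm (Φ * J * Φ) v)
  have hT : (Φ * J * Φ)ᵀ = -(Φ * J * Φ) := by
    rw [transpose_mul, transpose_mul, hJ, hΦsymm.eq]
    simp [mul_assoc]
  have hneg : (-(Φ * J * Φ)).map Complex.ofReal = -((Φ * J * Φ).map Complex.ofReal) := by
    ext i j
    simp
  rw [hΦsymm.eq] at hreal
  rw [hT, hneg, neg_mulVec, dotProduct_neg] at hskew
  have hre := congrArg Complex.re key
  rw [Complex.sub_re, Complex.mul_re] at hre
  simp only [Complex.star_def, Complex.conj_re, Complex.conj_im, Complex.neg_re] at hreal hskew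
  have him : (star v ⬝ᵥ (Φ.map Complex.ofReal).mulVec v).im = 0 := by linarith
  rw [him] at hre
  linarith
end

section
/- Let J be a real skew-symmetric n × n matrix, Φ a real symmetric positive definite n × n matrix, and D a real n × n matrix such that Φ D + Dᵀ Φ is positive semidefinite. Then every complex eigenvalue λ of the matrix F := JΦ - D satisfies Re(λ) ≤ 0. -/
open Matrix

/-!
`Φ` is a Lyapunov matrix for `F = JΦ - D`: since `ΦJΦ` is skew-symmetric,
`xᵀΦFx = -½ xᵀ(ΦD + DᵀΦ)x ≤ 0` for real `x` (`dotProduct_lyapunov_nonpos`). If `v = x + iy` is an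
eigenvector for `λ = a + ib`, then `Fx = ax - by` and `Fy = bx + ay`, so symmetry of `Φ` gives
`xᵀΦFx + yᵀΦFy = a (xᵀΦx + yᵀΦy)`. The left side is nonpositive and the factor of `a` is
positive, hence `a ≤ 0`. Splitting `v` this way keeps all quadratic forms real.
-/

lemma dotProduct_lyapunov_nonpos {n : ℕ} {J Φ D : Matrix (Fin n) (Fin n) ℝ}
    (hJ : Jᵀ = -J) (hΦ : Φᵀ = Φ)
    (hPSD : ∀ x : Fin n → ℝ, 0 ≤ x ⬝ᵥ (Φ * D + Dᵀ * Φ).mulVec x) (x : Fin n → ℝ) :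
    x ⬝ᵥ Φ *ᵥ ((J * Φ - D) *ᵥ x) ≤ 0 := by
  have transpose_form (A : Matrix (Fin n) (Fin n) ℝ) : x ⬝ᵥ Aᵀ *ᵥ x = x ⬝ᵥ A *ᵥ x := by
    rw [mulVec_transpose, dotProduct_comm, dotProduct_mulVec]
  have hskew : x ⬝ᵥ (Φ * (J * Φ)) *ᵥ x = 0 := by
    have h := transpose_form (Φ * (J * Φ))
    rw [transpose_mul, transpose_mul, hJ, hΦ, mul_neg, neg_mul, neg_mulVec, dotProduct_neg,
      Matrix.mul_assoc] at h
    linarith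
  have hD : x ⬝ᵥ (Dᵀ * Φ) *ᵥ x = x ⬝ᵥ (Φ * D) *ᵥ x := by
    have h := transpose_form (Φ * D)
    rwa [transpose_mul, hΦ] at h
  have hx := hPSD x
  rw [add_mulVec, dotProduct_add, hD] at hx
  rw [mulVec_mulVec, mul_sub, sub_mulVec, dotProduct_sub, hskew]
  linarith

/-- if `J` is real skew-symmetric, `Φ` real symmetric positive definite,
and `ΦD + DᵀΦ` is positive semidefinite, then every complex eigenvalue of
`F = JΦ - D` has nonpositive real part. -/
theorem eigenvalues_nonpositive_real_part
    (n : ℕ) (J Φ D : Matrix (Fin n) (Fin n) ℝ)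
    (hJ : Jᵀ = -J) (hΦ : Φ.PosDef)
    (hPSD : ∀ x : Fin n → ℝ, 0 ≤ x ⬝ᵥ (Φ * D + Dᵀ * Φ).mulVec x)
    (lam : ℂ)
    (hlam : lam ∈ spectrum ℂ ((J * Φ - D).map Complex.ofReal)) :
    lam.re ≤ 0 := by
  have hsymm : Φᵀ = Φ := by
    have h := hΦ.isHermitian.eq
    rwa [conjTranspose_eq_transpose_of_trivial] at h
  have hform := dotProduct_lyapunov_nonpos hJ hsymm hPSD
  generalize J * Φ - D = F at hlam hform
  rw [← Matrix.spectrum_toLin', ← Module.End.hasEigenvalue_iff_mem_spectrum] at hlam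
  obtain ⟨v, hv⟩ := hlam.exists_hasEigenvector
  have heq : F.map Complex.ofReal *ᵥ v = lam • v := by
    simpa [Matrix.toLin'_apply] using hv.apply_eq_smul
  set x : Fin n → ℝ := fun i => (v i).re with hx
  set y : Fin n → ℝ := fun i => (v i).im with hy
  have hFx : F *ᵥ x = lam.re • x - lam.im • y := by
    ext i
    have h := congrArg Complex.re (congrFun heq i)
    simpa [mulVec, dotProduct] using h
  have hFy : F *ᵥ y = lam.im • x + lam.re • y := by
    ext i
    have h := congrArg Complex.im (congrFun heq i)
    simp [mulVec, dotProduct] at h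
    simp [mulVec, dotProduct, hx, hy, h, add_comm]
  have hxy : y ⬝ᵥ Φ *ᵥ x = x ⬝ᵥ Φ *ᵥ y := by
    rw [dotProduct_mulVec, ← mulVec_transpose, hsymm, dotProduct_comm]
  have hsum := add_nonpos (hform x) (hform y)
  simp only [hFx, hFy, mulVec_sub, mulVec_add, mulVec_smul, dotProduct_sub, dotProduct_add,
    dotProduct_smul, smul_eq_mul, hxy] at hsum
  have hx0 : 0 ≤ x ⬝ᵥ Φ *ᵥ x := by
    simpa using hΦ.posSemidef.dotProduct_mulVec_nonneg x
  have hy0 : 0 ≤ y ⬝ᵥ Φ *ᵥ y := by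
    simpa using hΦ.posSemidef.dotProduct_mulVec_nonneg y
  have hpos : 0 < x ⬝ᵥ Φ *ᵥ x + y ⬝ᵥ Φ *ᵥ y := by
    by_cases hxz : x = 0
    · have hyz : y ≠ 0 := by
        intro hyz
        apply hv.2
        ext i
        exact Complex.ext (congrFun hxz i) (congrFun hyz i)
      have : 0 < y ⬝ᵥ Φ *ᵥ y := by simpa using hΦ.dotProduct_mulVec_pos hyz
      linarith
    · have : 0 < x ⬝ᵥ Φ *ᵥ x := by simpa using hΦ.dotProduct_mulVec_pos hxz
      linarith
  by_contra! hre
  nlinarith [mul_pos hre hpos]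
end

section
/- Let V, W be real symmetric positive definite n × n matrices, let K be a real symmetric n × n matrix such that W·K + K·W is positive definite, let J_qp be an invertible real n × n matrix, and let J_pp be a real skew-symmetric n × n matrix (J_ppᵀ = -J_pp). Then the 2n × 2n block matrix F₁₁ := fromBlocks 0 (J_qp·W) (-(J_qpᵀ)·V) (J_pp·W - K) is Hurwitz: every complex eigenvalue λ of F₁₁ satisfies Re(λ) < 0. -/
open Matrix

/-!
If `(x, y)` is an eigenvector of `F₁₁` for `lam`, the energy `E = x* V x + y* W y` is positive and
`lam * E` equals a purely imaginary number (the `J_qp` terms cancel in pairs, the `J_pp` term is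
skew) minus `y* W K y`, so `2 Re lam * E = - y* (W K + K W) y`. This is negative unless `y = 0`; and
`y = 0` forces `J_qpᵀ V x = 0`, hence `x = 0`, as `J_qp` and `V` are invertible.

The computation is carried out over `ℝ`: with `lam = s + i t`, `x = a + i b`, `y = c + i d`, the
eigenvalue equation splits into four real vector equations (`re_neg_of_real_system`).
-/

/-- The energy argument for the real and imaginary parts `s`, `t` of the eigenvalue and
`(a, c)`, `(b, d)` of the eigenvector. -/
theorem re_neg_of_real_system {n : ℕ} {V W K Jqp Jpp : Matrix (Fin n) (Fin n) ℝ}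
    (hV : V.PosDef) (hW : W.PosDef)
    (hK : K.IsSymm) (hWK : (W * K + K * W).PosDef)
    (hJqp : IsUnit Jqp) (hJpp : Jppᵀ = -Jpp)
    {s t : ℝ} {a b c d : Fin n → ℝ}
    (h1 : Jqp *ᵥ (W *ᵥ c) = s • a - t • b)
    (h2 : Jqp *ᵥ (W *ᵥ d) = s • b + t • a)
    (h3 : -(Jqpᵀ *ᵥ (V *ᵥ a)) + (Jpp *ᵥ (W *ᵥ c) - K *ᵥ c) = s • c - t • d)
    (h4 : -(Jqpᵀ *ᵥ (V *ᵥ b)) + (Jpp *ᵥ (W *ᵥ d) - K *ᵥ d) = s • d + t • c)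
    (hne : ¬ (a = 0 ∧ b = 0 ∧ c = 0 ∧ d = 0)) : s < 0 := by
  have swap (M : Matrix (Fin n) (Fin n) ℝ) (u v : Fin n → ℝ) :
      u ⬝ᵥ (M *ᵥ v) = (Mᵀ *ᵥ u) ⬝ᵥ v := by
    rw [dotProduct_mulVec, mulVec_transpose]
  have hVt : Vᵀ = V := by simpa [IsHermitian] using hV.isHermitian
  have hWt : Wᵀ = W := by simpa [IsHermitian] using hW.isHermitian
  have nonneg {P : Matrix (Fin n) (Fin n) ℝ} (hP : P.PosDef) (u : Fin n → ℝ) :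
      0 ≤ u ⬝ᵥ (P *ᵥ u) := by
    simpa using hP.posSemidef.dotProduct_mulVec_nonneg u
  have pos {P : Matrix (Fin n) (Fin n) ℝ} (hP : P.PosDef) {u : Fin n → ℝ} (hu : u ≠ 0) :
      0 < u ⬝ᵥ (P *ᵥ u) := by
    simpa using hP.dotProduct_mulVec_pos hu
  have skew (u : Fin n → ℝ) : u ⬝ᵥ (Jpp *ᵥ u) = 0 := by
    have h := swap Jpp u u
    rw [hJpp, neg_mulVec, neg_dotProduct, dotProduct_comm (Jpp *ᵥ u)] at h
    linarith
  have hdis (u : Fin n → ℝ) :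
      u ⬝ᵥ ((W * K + K * W) *ᵥ u) = 2 * ((W *ᵥ u) ⬝ᵥ (K *ᵥ u)) := by
    rw [add_mulVec, dotProduct_add, ← mulVec_mulVec, ← mulVec_mulVec, swap W, swap K u, hWt,
      hK.eq, dotProduct_comm (K *ᵥ u)]
    ring
  have symV : b ⬝ᵥ (V *ᵥ a) = a ⬝ᵥ (V *ᵥ b) := by
    rw [swap, hVt, dotProduct_comm]
  have symW : d ⬝ᵥ (W *ᵥ c) = c ⬝ᵥ (W *ᵥ d) := by
    rw [swap, hWt, dotProduct_comm]
  have e1 := congrArg (fun v => (V *ᵥ a) ⬝ᵥ v) h1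
  have e2 := congrArg (fun v => (V *ᵥ b) ⬝ᵥ v) h2
  have e3 := congrArg (fun v => (W *ᵥ c) ⬝ᵥ v) h3
  have e4 := congrArg (fun v => (W *ᵥ d) ⬝ᵥ v) h4
  simp only [dotProduct_add, dotProduct_sub, dotProduct_neg, dotProduct_smul, smul_eq_mul,
    skew] at e1 e2 e3 e4
  rw [swap Jqp, dotProduct_comm] at e1 e2
  rw [dotProduct_comm (V *ᵥ a) a, dotProduct_comm (V *ᵥ a) b, symV] at e1
  rw [dotProduct_comm (V *ᵥ b) b, dotProduct_comm (V *ᵥ b) a] at e2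
  rw [dotProduct_comm (W *ᵥ c) c, dotProduct_comm (W *ᵥ c) d, symW] at e3
  rw [dotProduct_comm (W *ᵥ d) d, dotProduct_comm (W *ᵥ d) c] at e4
  have hE : s * (a ⬝ᵥ (V *ᵥ a) + b ⬝ᵥ (V *ᵥ b) + c ⬝ᵥ (W *ᵥ c) + d ⬝ᵥ (W *ᵥ d))
      = -((W *ᵥ c) ⬝ᵥ (K *ᵥ c)) - (W *ᵥ d) ⬝ᵥ (K *ᵥ d) := by
    linarith
  have hcd : c ≠ 0 ∨ d ≠ 0 := by
    by_contra! h
    obtain ⟨rfl, rfl⟩ := h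
    have key {u : Fin n → ℝ} (hu : Jqpᵀ *ᵥ (V *ᵥ u) = 0) : u = 0 := by
      have i1 := mulVec_injective_of_isUnit ((Matrix.isUnit_transpose Jqp).2 hJqp)
      have i2 := mulVec_injective_of_isUnit hV.isUnit
      apply i2
      apply i1
      simpa using hu
    exact hne ⟨key (by simpa using h3), key (by simpa using h4), rfl, rfl⟩
  have dc := nonneg hWK c
  rw [hdis] at dc
  have dd := nonneg hWK d
  rw [hdis] at dd
  have hneg : s * (a ⬝ᵥ (V *ᵥ a) + b ⬝ᵥ (V *ᵥ b) + c ⬝ᵥ (W *ᵥ c) + d ⬝ᵥ (W *ᵥ d)) < 0 := by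
    rw [hE]
    rcases hcd with h | h
    · have := pos hWK h
      rw [hdis] at this
      linarith
    · have := pos hWK h
      rw [hdis] at this
      linarith
  refine neg_of_mul_neg_left hneg ?_
  have := nonneg hV a
  have := nonneg hV b
  have := nonneg hW c
  have := nonneg hW d
  linarith

/-- the Jacobian block matrix
`F₁₁ = fromBlocks 0 (J_qp W) (-(J_qpᵀ) V) (J_pp W - K)` of the shaped
`(q,p)`-subsystem of DPSC is Hurwitz: every complex eigenvalue has negative
real part, provided `V, W` are symmetric positive definite, `K` is symmetric
with `WK + KW` positive definite, `J_qp` is invertible and `J_pp` is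
skew-symmetric. -/
theorem dpsc_jacobian_block_hurwitz
    (n : ℕ) (V W K Jqp Jpp : Matrix (Fin n) (Fin n) ℝ)
    (hV : V.PosDef) (hW : W.PosDef)
    (hK : K.IsSymm) (hWK : (W * K + K * W).PosDef)
    (hJqp : IsUnit Jqp) (hJpp : Jppᵀ = -Jpp)
    (lam : ℂ)
    (hlam : lam ∈ spectrum ℂ
      ((Matrix.fromBlocks (0 : Matrix (Fin n) (Fin n) ℝ)
        (Jqp * W) (-(Jqpᵀ) * V) (Jpp * W - K)).map Complex.ofReal)) :
    lam.re < 0 := by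
  rw [← Matrix.spectrum_toLin', ← Module.End.hasEigenvalue_iff_mem_spectrum] at hlam
  obtain ⟨z, hz⟩ := hlam.exists_hasEigenvector
  have hz1 := hz.apply_eq_smul
  have hz0 := hz.2
  rw [toLin'_apply] at hz1
  set F := fromBlocks (0 : Matrix (Fin n) (Fin n) ℝ) (Jqp * W) (-(Jqpᵀ) * V) (Jpp * W - K)
    with hF
  have hre : F *ᵥ (fun i => (z i).re)
      = lam.re • (fun i => (z i).re) - lam.im • (fun i => (z i).im) := by
    ext i
    have := congrArg Complex.re (congrFun hz1 i)
    simpa [mulVec, dotProduct, Complex.re_sum] using this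
  have him : F *ᵥ (fun i => (z i).im)
      = lam.re • (fun i => (z i).im) + lam.im • (fun i => (z i).re) := by
    ext i
    have := congrArg Complex.im (congrFun hz1 i)
    simpa [mulVec, dotProduct, Complex.im_sum] using this
  rw [hF, fromBlocks_mulVec] at hre him
  have r1 := funext fun i => congrFun hre (Sum.inl i)
  have r2 := funext fun i => congrFun him (Sum.inl i)
  have r3 := funext fun i => congrFun hre (Sum.inr i)
  have r4 := funext fun i => congrFun him (Sum.inr i)
  simp only [Sum.elim_inl, Sum.elim_inr, zero_mulVec, zero_add, sub_mulVec, neg_mul, neg_mulVec,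
    ← mulVec_mulVec] at r1 r2 r3 r4
  refine re_neg_of_real_system hV hW hK hWK hJqp hJpp r1 r2 r3 r4 ?_
  rintro ⟨ha, hb, hc, hd⟩
  apply hz0
  ext i
  rcases i with i | i
  · exact Complex.ext (congrFun ha i) (congrFun hb i)
  · exact Complex.ext (congrFun hc i) (congrFun hd i)
end

section
/- Let M₁ be a real symmetric positive definite n₁ × n₁ matrix and M₂ a real symmetric positive definite n₂ × n₂ matrix, let β₁, β₂ > 0, let c ≥ 0, and let F₁₁ : ℝ → Matrix(n₁,n₁,ℝ), F₂₁ : ℝ → Matrix(n₂,n₁,ℝ), F₂₂ : ℝ → Matrix(n₂,n₂,ℝ) be families of real matrices such that for every t: M₁·F₁₁(t) + F₁₁(t)ᵀ·M₁ ⪯ -2β₁·M₁, M₂·F₂₂(t) + F₂₂(t)ᵀ·M₂ ⪯ -2β₂·M₂, and ‖F₂₁(t)·x‖ ≤ c‖x‖ for all x ∈ ℝ^{n₁}. Then there exist ε > 0 and β > 0 such that, setting M := fromBlocks M₁ 0 0 (ε·M₂) and F(t) := fromBlocks (F₁₁(t)) 0 (F₂₁(t)) (F₂₂(t)), one has M·F(t)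 + F(t)ᵀ·M ⪯ -2β·M for every t. -/
/-!
Write `a = x ⬝ᵥ M₁ x`, `b = y ⬝ᵥ M₂ y` and `w = F₂₁(t) x`. The quadratic form of `M F + Fᵀ M` at
`(x, y)` is at most `-2 β₁ a - 2 ε β₂ b + 2 ε (y ⬝ᵥ M₂ w)`. By Young's inequality in the metric `M₂`,
`2 (y ⬝ᵥ M₂ w) ≤ β₂ b + β₂⁻¹ (w ⬝ᵥ M₂ w)`, and comparing `M₁`, `M₂` with the identity
(`PosDef.exists_dotProduct_self_le`, `exists_quadForm_le`) gives `w ⬝ᵥ M₂ w ≤ D a` with `D > 0`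
independent of `t`. With `ε = β₁ β₂ / D` the form is at most `-β₁ a - ε β₂ b`, which is the claim for
`β = min β₁ β₂ / 2`.
-/

open Matrix

lemma exists_quadForm_le {n : ℕ} (M : Matrix (Fin n) (Fin n) ℝ) :
    ∃ K > (0 : ℝ), ∀ x : Fin n → ℝ, x ⬝ᵥ M *ᵥ x ≤ K * (x ⬝ᵥ x) := by
  refine ⟨(∑ i, ∑ j, |M i j|) + 1, by positivity, fun x => ?_⟩
  have hsq : ∀ i, x i ^ 2 ≤ x ⬝ᵥ x := fun i => by
    rw [dotProduct, pow_two]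
    exact Finset.single_le_sum (f := fun i => x i * x i)
      (fun j _ => mul_self_nonneg (x j)) (Finset.mem_univ i)
  have hxx : 0 ≤ x ⬝ᵥ x := Finset.sum_nonneg fun i _ => mul_self_nonneg (x i)
  have hterm : x ⬝ᵥ M *ᵥ x ≤ (∑ i, ∑ j, |M i j|) * (x ⬝ᵥ x) := by
    rw [dotProduct, Finset.sum_mul]
    refine Finset.sum_le_sum fun i _ => ?_
    rw [mulVec, dotProduct, Finset.mul_sum, Finset.sum_mul]
    refine Finset.sum_le_sum fun j _ => ?_
    have hij : |x i * x j| ≤ x ⬝ᵥ x := by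
      rw [abs_le]
      constructor <;>
        nlinarith [hsq i, hsq j, sq_nonneg (x i + x j), sq_nonneg (x i - x j)]
    calc x i * (M i j * x j) = M i j * (x i * x j) := by ring
      _ ≤ |M i j * (x i * x j)| := le_abs_self _
      _ = |M i j| * |x i * x j| := abs_mul _ _
      _ ≤ |M i j| * (x ⬝ᵥ x) := by gcongr
  linarith

lemma dotProduct_mulVec_comm_of_isHermitian {m : Type*} [Fintype m] {M : Matrix m m ℝ}
    (hM : M.IsHermitian) (x y : m → ℝ) : x ⬝ᵥ M *ᵥ y = y ⬝ᵥ M *ᵥ x := by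
  have hT : Mᵀ = M := by simpa using hM.eq
  rw [dotProduct_mulVec, ← mulVec_transpose, hT, dotProduct_comm]

/-- The quadratic form of a positive semidefinite matrix is nonnegative at `p - s q`. -/
lemma PosSemidef.two_mul_cross_le {m : Type*} [Fintype m] {M : Matrix m m ℝ}
    (hM : M.PosSemidef) (p q : m → ℝ) (s : ℝ) :
    2 * s * (p ⬝ᵥ M *ᵥ q) ≤ p ⬝ᵥ M *ᵥ p + s ^ 2 * (q ⬝ᵥ M *ᵥ q) := by
  have h := hM.dotProduct_mulVec_nonneg (p - s • q)
  have hc := dotProduct_mulVec_comm_of_isHermitian hM.isHermitian q p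
  simp only [star_trivial, mulVec_sub, mulVec_smul, sub_dotProduct, dotProduct_sub,
    smul_dotProduct, dotProduct_smul, smul_eq_mul, hc] at h
  linarith

/-- A positive definite form dominates a multiple of the Euclidean one. With `K` an upper bound for
`M⁻¹`, nonnegativity of the form `M` at `x - K⁻¹ M⁻¹ x` gives the bound with this same `K`. -/
lemma PosDef.exists_dotProduct_self_le {n : ℕ} {M : Matrix (Fin n) (Fin n) ℝ} (hM : M.PosDef) :
    ∃ K > (0 : ℝ), ∀ x : Fin n → ℝ, x ⬝ᵥ x ≤ K * (x ⬝ᵥ M *ᵥ x) := by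
  obtain ⟨K, hK, hle⟩ := exists_quadForm_le M⁻¹
  refine ⟨K, hK, fun x => ?_⟩
  have hinv : M *ᵥ (M⁻¹ *ᵥ x) = x := by
    rw [mulVec_mulVec, mul_nonsing_inv _ ((isUnit_iff_isUnit_det _).1 hM.isUnit), one_mulVec]
  have h := PosSemidef.two_mul_cross_le hM.posSemidef x (M⁻¹ *ᵥ x) K⁻¹
  rw [hinv, dotProduct_comm (M⁻¹ *ᵥ x) x] at h
  have h2 : K⁻¹ ^ 2 * (x ⬝ᵥ M⁻¹ *ᵥ x) ≤ K⁻¹ * (x ⬝ᵥ x) := by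
    calc K⁻¹ ^ 2 * (x ⬝ᵥ M⁻¹ *ᵥ x) ≤ K⁻¹ ^ 2 * (K * (x ⬝ᵥ x)) := by gcongr; exact hle x
      _ = K⁻¹ * (x ⬝ᵥ x) := by field_simp
  have h3 : K⁻¹ * (x ⬝ᵥ x) ≤ x ⬝ᵥ M *ᵥ x := by linarith
  rwa [inv_mul_le_iff₀ hK] at h3

lemma lyapunov_quadForm {m : Type*} [Fintype m] {M : Matrix m m ℝ} (hM : M.IsHermitian)
    (F : Matrix m m ℝ) (r : ℝ) (x : m → ℝ) :
    x ⬝ᵥ (r • M - (M * F + Fᵀ * M)) *ᵥ x = r * (x ⬝ᵥ M *ᵥ x) - 2 * (x ⬝ᵥ M *ᵥ (F *ᵥ x)) := by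
  have h : x ⬝ᵥ Fᵀ *ᵥ (M *ᵥ x) = x ⬝ᵥ M *ᵥ (F *ᵥ x) := by
    rw [dotProduct_mulVec, vecMul_transpose, dotProduct_mulVec_comm_of_isHermitian hM]
  simp only [sub_mulVec, add_mulVec, smul_mulVec, ← mulVec_mulVec, dotProduct_sub,
    dotProduct_add, dotProduct_smul, smul_eq_mul, h]
  ring

lemma lyapunov_isHermitian {m : Type*} [Fintype m] {M : Matrix m m ℝ} (hM : M.IsHermitian)
    (F : Matrix m m ℝ) (r : ℝ) : (r • M - (M * F + Fᵀ * M)).IsHermitian := by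
  have hT : Mᵀ = M := by simpa using hM.eq
  simp [IsHermitian, conjTranspose_eq_transpose_of_trivial, transpose_mul, hT, add_comm]



/-- composite-metric inequality for hierarchical contraction: if the
diagonal blocks `F₁₁(t)`, `F₂₂(t)` are contracting in metrics `M₁`, `M₂` with rates
`β₁`, `β₂` (in the Loewner sense `M F + Fᵀ M ⪯ -2β M`), and the coupling block
`F₂₁(t)` is bounded in Euclidean operator norm by `c`, then for some `ε > 0` the
composite metric `blkdiag(M₁, εM₂)` yields a uniform contraction rate `β > 0`
for the lower-triangular family `fromBlocks F₁₁ 0 F₂₁ F₂₂`. -/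
theorem hierarchical_contraction_metric
    (n₁ n₂ : ℕ)
    (M₁ : Matrix (Fin n₁) (Fin n₁) ℝ) (M₂ : Matrix (Fin n₂) (Fin n₂) ℝ)
    (hM₁ : M₁.PosDef) (hM₂ : M₂.PosDef)
    (β₁ β₂ : ℝ) (hβ₁ : 0 < β₁) (hβ₂ : 0 < β₂)
    (c : ℝ) (hc : 0 ≤ c)
    (F₁₁ : ℝ → Matrix (Fin n₁) (Fin n₁) ℝ)
    (F₂₁ : ℝ → Matrix (Fin n₂) (Fin n₁) ℝ)
    (F₂₂ : ℝ → Matrix (Fin n₂) (Fin n₂) ℝ)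
    (h₁ : ∀ t, ((-(2 * β₁)) • M₁ - (M₁ * F₁₁ t + (F₁₁ t)ᵀ * M₁)).PosSemidef)
    (h₂ : ∀ t, ((-(2 * β₂)) • M₂ - (M₂ * F₂₂ t + (F₂₂ t)ᵀ * M₂)).PosSemidef)
    (h₂₁ : ∀ t, ∀ x : Fin n₁ → ℝ,
      Real.sqrt ((F₂₁ t).mulVec x ⬝ᵥ (F₂₁ t).mulVec x) ≤ c * Real.sqrt (x ⬝ᵥ x)) :
    ∃ ε > (0 : ℝ), ∃ β > (0 : ℝ), ∀ t,
      ((-(2 * β)) • (Matrix.fromBlocks M₁ 0 0 (ε • M₂))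
        - ((Matrix.fromBlocks M₁ 0 0 (ε • M₂))
              * (Matrix.fromBlocks (F₁₁ t) 0 (F₂₁ t) (F₂₂ t))
            + (Matrix.fromBlocks (F₁₁ t) 0 (F₂₁ t) (F₂₂ t))ᵀ
              * (Matrix.fromBlocks M₁ 0 0 (ε • M₂)))).PosSemidef := by
  obtain ⟨L, hL, hL'⟩ := PosDef.exists_dotProduct_self_le hM₁
  obtain ⟨K, hK, hK'⟩ := exists_quadForm_le M₂
  -- `c ^ 2 + 1` instead of `c ^ 2` keeps `D` positive when `c = 0`.
  obtain ⟨D, hD⟩ : ∃ D, D = K * (c ^ 2 + 1) * L := ⟨_, rfl⟩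
  have hDpos : 0 < D := by rw [hD]; positivity
  have hw : ∀ t x, (F₂₁ t *ᵥ x) ⬝ᵥ M₂ *ᵥ (F₂₁ t *ᵥ x) ≤ D * (x ⬝ᵥ M₁ *ᵥ x) := fun t x => by
    have hxx : 0 ≤ x ⬝ᵥ x := Finset.sum_nonneg fun i _ => mul_self_nonneg (x i)
    have hww : (F₂₁ t *ᵥ x) ⬝ᵥ (F₂₁ t *ᵥ x) ≤ c ^ 2 * (x ⬝ᵥ x) := by
      have h := (Real.sqrt_le_left (by positivity)).1 (h₂₁ t x)
      rwa [mul_pow, Real.sq_sqrt hxx] at h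
    calc (F₂₁ t *ᵥ x) ⬝ᵥ M₂ *ᵥ (F₂₁ t *ᵥ x) ≤ K * ((F₂₁ t *ᵥ x) ⬝ᵥ (F₂₁ t *ᵥ x)) := hK' _
      _ ≤ K * ((c ^ 2 + 1) * (x ⬝ᵥ x)) := by gcongr; linarith
      _ ≤ K * ((c ^ 2 + 1) * (L * (x ⬝ᵥ M₁ *ᵥ x))) := by gcongr; exact hL' x
      _ = D * (x ⬝ᵥ M₁ *ᵥ x) := by rw [hD]; ring
  obtain ⟨ε, hε⟩ : ∃ ε, ε = β₁ * β₂ / D := ⟨_, rfl⟩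
  have hεpos : 0 < ε := by rw [hε]; positivity
  refine ⟨ε, hεpos, min β₁ β₂ / 2, by positivity, fun t => ?_⟩
  have hM : (fromBlocks M₁ 0 0 (ε • M₂)).IsHermitian :=
    hM₁.isHermitian.fromBlocks (by simp) (hM₂.posSemidef.smul hεpos.le).isHermitian
  refine PosSemidef.of_dotProduct_mulVec_nonneg (lyapunov_isHermitian hM _ _) fun z => ?_
  obtain ⟨x, y, rfl⟩ : ∃ x y, z = Sum.elim x y := ⟨_, _, (Sum.elim_comp_inl_inr z).symm⟩
  rw [star_trivial, lyapunov_quadForm hM]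
  have e₁ := (h₁ t).dotProduct_mulVec_nonneg x
  have e₂ := (h₂ t).dotProduct_mulVec_nonneg y
  rw [star_trivial, lyapunov_quadForm hM₁.isHermitian] at e₁
  rw [star_trivial, lyapunov_quadForm hM₂.isHermitian] at e₂
  have ha := hM₁.posSemidef.dotProduct_mulVec_nonneg x
  have hb := hM₂.posSemidef.dotProduct_mulVec_nonneg y
  rw [star_trivial] at ha hb
  have hcross := PosSemidef.two_mul_cross_le hM₂.posSemidef y (F₂₁ t *ᵥ x) β₂⁻¹
  have hwt := hw t x
  simp only [fromBlocks_mulVec, Sum.elim_comp_inl, Sum.elim_comp_inr, zero_mulVec, add_zero,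
    zero_add, sumElim_dotProduct_sumElim, smul_mulVec, dotProduct_smul, smul_eq_mul, mulVec_add,
    dotProduct_add]
  generalize x ⬝ᵥ M₁ *ᵥ x = a at *
  generalize y ⬝ᵥ M₂ *ᵥ y = b at *
  generalize x ⬝ᵥ M₁ *ᵥ (F₁₁ t *ᵥ x) = p at *
  generalize y ⬝ᵥ M₂ *ᵥ (F₂₂ t *ᵥ y) = q at *
  generalize y ⬝ᵥ M₂ *ᵥ (F₂₁ t *ᵥ x) = r at *
  generalize (F₂₁ t *ᵥ x) ⬝ᵥ M₂ *ᵥ (F₂₁ t *ᵥ x) = w at *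
  have hyoung : ε * (2 * r) ≤ ε * β₂ * b + β₁ * a := by
    calc ε * (2 * r) = ε * β₂ * (2 * β₂⁻¹ * r) := by field_simp
      _ ≤ ε * β₂ * (b + β₂⁻¹ ^ 2 * (D * a)) := by
        gcongr
        exact hcross.trans (by gcongr)
      _ = ε * β₂ * b + β₁ * a := by rw [hε]; field_simp
  have m₁ : min β₁ β₂ * a ≤ β₁ * a := by gcongr; exact min_le_left _ _
  have m₂ : ε * (min β₁ β₂ * b) ≤ ε * (β₂ * b) := by gcongr; exact min_le_right _ _
  have e₂' := mul_nonneg hεpos.le e₂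
  linarith
end

section
/- Let M be a real symmetric positive definite n × n matrix, β > 0, and A : ℝ → Matrix(n,n,ℝ) a family of real matrices satisfying M·A(t) + A(t)ᵀ·M ⪯ -2β·M for all t. Let x : ℝ → ℝⁿ be differentiable with x'(t) = A(t)·x(t) for all t. Then for all t ≥ 0, x(t)ᵀ·M·x(t) ≤ exp(-2βt) · (x(0)ᵀ·M·x(0)). -/
/-!
The squared `M`-norm `V(s) = x(s)ᵀ M x(s)` has derivative `xᵀ (M A + Aᵀ M) x` along the flow, which
the contraction inequality bounds by `-2β V`. Hence `s ↦ exp(2βs) V(s)` has nonpositive derivative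
and is antitone; comparing its values at `0` and `t` gives the decay.
-/

open Matrix

theorem hasDerivAt_dotProduct_mulVec {n : ℕ} (M : Matrix (Fin n) (Fin n) ℝ)
    {x : ℝ → Fin n → ℝ} {x' : Fin n → ℝ} {s : ℝ} (hx : HasDerivAt x x' s) :
    HasDerivAt (fun s => x s ⬝ᵥ M.mulVec (x s))
      (x' ⬝ᵥ M.mulVec (x s) + x s ⬝ᵥ M.mulVec x') s := by
  have hc : ∀ i, HasDerivAt (fun s => x s i) (x' i) s := hasDerivAt_pi.1 hx
  have hMc : ∀ i, HasDerivAt (fun s => M.mulVec (x s) i) (M.mulVec x' i) s := fun i =>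
    HasDerivAt.fun_sum (u := Finset.univ) fun j _ => (hc j).const_mul (M i j)
  have h := HasDerivAt.fun_sum (u := Finset.univ) fun i _ => (hc i).mul (hMc i)
  rw [Finset.sum_add_distrib] at h
  exact h

/-- exponential decay of the squared `M`-norm along a linear
time-varying system `x' = A(t) x` whose coefficient matrices satisfy the
contraction inequality `M A(t) + A(t)ᵀ M ⪯ -2β M` in a constant symmetric
positive definite metric `M`. -/
theorem contraction_metric_exponential_decay
    (n : ℕ) (M : Matrix (Fin n) (Fin n) ℝ) (hM : M.PosDef)
    (β : ℝ) (hβ : 0 < β)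
    (A : ℝ → Matrix (Fin n) (Fin n) ℝ)
    (hA : ∀ t, ((-(2 * β)) • M - (M * A t + (A t)ᵀ * M)).PosSemidef)
    (x : ℝ → Fin n → ℝ)
    (hx : ∀ t, HasDerivAt x ((A t).mulVec (x t)) t)
    (t : ℝ) (ht : 0 ≤ t) :
    x t ⬝ᵥ M.mulVec (x t) ≤ Real.exp (-(2 * β) * t) * (x 0 ⬝ᵥ M.mulVec (x 0)) := by
  have hV := fun s => hasDerivAt_dotProduct_mulVec M (hx s)
  set V : ℝ → ℝ := fun s => x s ⬝ᵥ M.mulVec (x s) with hVdef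
  have hbound : ∀ s, (A s).mulVec (x s) ⬝ᵥ M.mulVec (x s)
      + x s ⬝ᵥ M.mulVec ((A s).mulVec (x s)) ≤ -(2 * β) * V s := by
    intro s
    have h := (hA s).dotProduct_mulVec_nonneg (x s)
    have hT : x s ⬝ᵥ (A s)ᵀ.mulVec (M.mulVec (x s))
        = (A s).mulVec (x s) ⬝ᵥ M.mulVec (x s) := by
      rw [dotProduct_mulVec, vecMul_transpose]
    simp only [star_trivial, sub_mulVec, add_mulVec, smul_mulVec, dotProduct_sub,
      dotProduct_add, dotProduct_smul, smul_eq_mul, ← mulVec_mulVec, hT] at h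
    linarith
  have hE : ∀ s, HasDerivAt (fun s => Real.exp (2 * β * s)) (Real.exp (2 * β * s) * (2 * β)) s :=
    fun s => by simpa using ((hasDerivAt_id s).const_mul (2 * β)).exp
  have hanti : Antitone fun s => Real.exp (2 * β * s) * V s := by
    refine antitone_of_hasDerivAt_nonpos (fun s => (hE s).mul (hV s)) fun s => ?_
    have h := mul_le_mul_of_nonneg_left (hbound s) (Real.exp_pos (2 * β * s)).le
    simp only [Pi.zero_apply]
    linarith
  have h0 : Real.exp (2 * β * t) * V t ≤ V 0 := by simpa using hanti ht
  calc V t = Real.exp (-(2 * β) * t) * (Real.exp (2 * β * t) * V t) := by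
        rw [← mul_assoc, ← Real.exp_add]; simp
    _ ≤ Real.exp (-(2 * β) * t) * V 0 := mul_le_mul_of_nonneg_left h0 (Real.exp_pos _).le
end

section
/- Let m > 0, k > 0, r₂ ≥ 0 and b, c ∈ ℝ, and let q, p, s, u : ℝ → ℝ with q, p, s differentiable at t and satisfying the magnetic levitation dynamics q'(t) = p(t)/m, p'(t) = -b + s(t)²/(2k), s'(t) = -r₂·(c - q(t))·s(t)/k + u(t). Define the total energy H(t) := p(t)²/(2m) + b·q(t) + (c - q(t))·s(t)²/(2k) and the output y(t) := (c - q(t))·s(t)/k. Then H is differentiable at t with H'(t) = -(r₂/k²)·(c - q(t))²·s(t)² + y(t)·u(t); in particular H'(t) ≤ y(t)·u(t). -/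
/-- power balance and passivity for the magnetic levitation PHS-DP:
along solutions of `q' = p/m`, `p' = -b + s²/(2k)`,
`s' = -r₂(c - q)s/k + u`, the total energy
`H = p²/(2m) + bq + (c - q)s²/(2k)` is differentiable with
`H' = -(r₂/k²)(c - q)²s² + y·u` where `y = (c - q)s/k`; in particular
`H' ≤ y·u`. -/
theorem maglev_power_balance
    (m k r₂ b c : ℝ) (hm : 0 < m) (hk : 0 < k) (hr₂ : 0 ≤ r₂)
    (q p s u : ℝ → ℝ) (t : ℝ)
    (hq : HasDerivAt q (p t / m) t)
    (hp : HasDerivAt p (-b + (s t) ^ 2 / (2 * k)) t)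
    (hs : HasDerivAt s (-(r₂ * (c - q t) * s t / k) + u t) t) :
    HasDerivAt (fun τ => (p τ) ^ 2 / (2 * m) + b * q τ + (c - q τ) * (s τ) ^ 2 / (2 * k))
        (-(r₂ / k ^ 2) * (c - q t) ^ 2 * (s t) ^ 2 + ((c - q t) * s t / k) * u t) t
      ∧ -(r₂ / k ^ 2) * (c - q t) ^ 2 * (s t) ^ 2 + ((c - q t) * s t / k) * u t
          ≤ ((c - q t) * s t / k) * u t := by
  constructor
  · have h := (((hp.pow 2).div_const (2 * m)).add (hq.const_mul b)).add
      (((hq.const_sub c).mul (hs.pow 2)).div_const (2 * k))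
    -- The exchange terms `± b p / m` and `± p s² / (2 k m)` between the mechanical and
    -- magnetic parts cancel, leaving only dissipation and supplied power.
    refine h.congr_deriv ?_
    simp only [Pi.pow_apply]
    field_simp
    ring
  · have h : 0 ≤ r₂ / k ^ 2 * (c - q t) ^ 2 * (s t) ^ 2 := by positivity
    linarith
end
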